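/- arXiv:1904.06223 — 3 statements merged into one kernel-verified Lean document; each statement's English description precedes it below -/
import Mathlib

section
/- Let α > -1 and p = α + 2. For z ∈ 𝔻 define f_z(ω) = log(2/(1-z̄ω)) / (log(2/(1-|z|²)))^{1/p} for ω ∈ 𝔻 (using the principal branch of the logarithm). Then there is a constant C > 0 independent of z such that ‖f_z‖_{D^p_α} ≤ C for all z ∈ 𝔻. -/
open MeasureTheory Metric Set Filter Topology ENNReal

noncomputable section

/-- The open unit disk in ℂ. -/
def unitDisk : Set ℂ := Metric.ball (0 : ℂ) 1

/-- The normalized Lebesgue area measure `dA = (1/π) dx dy` on ℂ. -/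
def areaMeasure : Measure ℂ := (ENNReal.ofReal (Real.pi)⁻¹) • (volume : Measure ℂ)

/-- `∫_𝔻 |f'(z)|^p (1-|z|²)^α dA(z)`, as an extended nonnegative real. -/
def dirichletLintegral (p α : ℝ) (f : ℂ → ℂ) : ℝ≥0∞ :=
  ∫⁻ z in unitDisk, ENNReal.ofReal (‖deriv f z‖ ^ p * (1 - ‖z‖ ^ 2) ^ α) ∂areaMeasure

/-- Membership in the weighted Dirichlet space `D^p_α`: analytic on 𝔻 with finite norm. -/
def MemDirichlet (p α : ℝ) (f : ℂ → ℂ) : Prop :=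
  DifferentiableOn ℂ f unitDisk ∧ dirichletLintegral p α f < ⊤

/-- The norm of the weighted Dirichlet space `D^p_α`:
`(|f(0)|^p + ∫_𝔻 |f'(z)|^p (1-|z|²)^α dA(z))^{1/p}`. -/
def dirichletNorm (p α : ℝ) (f : ℂ → ℂ) : ℝ :=
  (‖f 0‖ ^ p + (dirichletLintegral p α f).toReal) ^ (1 / p)

/-- The logarithmic test function `f_z(ω) = log(2/(1-z̄ω)) / (log(2/(1-|z|²)))^{1/p}`. -/
def testFnLog (p : ℝ) (z : ℂ) : ℂ → ℂ := fun ω =>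
  Complex.log (2 / (1 - (starRingEnd ℂ) z * ω)) /
    (((Real.log (2 / (1 - ‖z‖ ^ 2))) ^ (1 / p) : ℝ) : ℂ)


lemma theta_int (p b : ℝ) (hp : 1 < p) (hb : 0 < b) :
    ∫⁻ θ : ℝ, ENNReal.ofReal ((b + |θ|) ^ (-p)) ≤ ENNReal.ofReal (2 * (b ^ (1 - p) / (p - 1))) := by
  set h : ℝ → ℝ≥0∞ := (Ici b).indicator (fun t => ENNReal.ofReal (t ^ (-p))) with hh
  have hmeas : Measurable h :=
    (Measurable.ennreal_ofReal (by fun_prop)).indicator measurableSet_Ici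
  have hint : ∫⁻ t, h t = ENNReal.ofReal (b ^ (1 - p) / (p - 1)) := by
    rw [hh, lintegral_indicator measurableSet_Ici,
      setLIntegral_congr (Ioi_ae_eq_Ici (μ := volume) (a := b)).symm,
      ← ofReal_integral_eq_lintegral_ofReal]
    · rw [integral_Ioi_rpow_of_lt (by linarith) hb]
      congr 1
      rw [show -p + 1 = -(p - 1) by ring, neg_div_neg_eq, show -(p - 1) = 1 - p by ring]
    · exact integrableOn_Ioi_rpow_of_lt (by linarith) hb
    · filter_upwards [ae_restrict_mem measurableSet_Ioi] with x hx
      exact Real.rpow_nonneg (hb.le.trans (le_of_lt hx)) _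
  calc ∫⁻ θ : ℝ, ENNReal.ofReal ((b + |θ|) ^ (-p))
      ≤ ∫⁻ θ : ℝ, (h (b + θ) + h (b - θ)) := by
        apply lintegral_mono
        intro θ
        rcases le_total 0 θ with h0 | h0
        · refine le_trans ?_ le_self_add
          simp [hh, abs_of_nonneg h0, h0]
        · refine le_trans ?_ le_add_self
          simp [hh, abs_of_nonpos h0, h0, sub_eq_add_neg]
    _ = ENNReal.ofReal (2 * (b ^ (1 - p) / (p - 1))) := by
        rw [lintegral_add_left (by fun_prop), lintegral_add_left_eq_self h b,
          lintegral_sub_left_eq_self h b, hint, two_mul, ENNReal.ofReal_add] <;>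
        exact div_nonneg (Real.rpow_nonneg hb.le _) (by linarith)

lemma radial_int (α a : ℝ) (hα : -1 < α) (ha0 : 0 ≤ a) (ha1 : a < 1) :
    ∫⁻ r in Ioo (0:ℝ) 1, ENNReal.ofReal ((1 - r) ^ α * (1 - a * r) ^ (-(α + 1))) ≤
      ENNReal.ofReal (Real.log (1 / (1 - a)) + 1 / (α + 1)) := by
  have h1a : 0 < 1 - a := by linarith
  have hsub : Ioo (0:ℝ) 1 ⊆ Ioc 0 a ∪ Ioo a 1 := by
    intro x hx
    rcases le_or_gt x a with h | h
    · exact Or.inl ⟨hx.1, h⟩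
    · exact Or.inr ⟨h, hx.2⟩
  refine (lintegral_mono_set hsub).trans ((lintegral_union_le _ _ _).trans ?_)
  rw [ENNReal.ofReal_add (Real.log_nonneg (by rw [le_div_iff₀ h1a]; linarith))
    (by have : 0 < α + 1 := by linarith
        positivity)]
  refine add_le_add ?_ ?_
  · calc _ ≤ ∫⁻ r in Ioc 0 a, ENNReal.ofReal (1 / (1 - r)) := by
          apply setLIntegral_mono' measurableSet_Ioc
          intro r hr
          apply ENNReal.ofReal_le_ofReal
          have hr1 : 0 < 1 - r := by linarith [hr.2]
          have : 1 - r ≤ 1 - a * r := by nlinarith [hr.1]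
          calc (1 - r) ^ α * (1 - a * r) ^ (-(α + 1))
              ≤ (1 - r) ^ α * (1 - r) ^ (-(α + 1)) := by
                gcongr ?_ * ?_
                exact Real.rpow_le_rpow_of_nonpos hr1 this (by linarith)
            _ = 1 / (1 - r) := by
                rw [← Real.rpow_add hr1, show α + -(α + 1) = -1 by ring, Real.rpow_neg_one,
                  one_div]
      _ = ENNReal.ofReal (∫ r in (0:ℝ)..a, 1 / (1 - r)) := by
          rw [intervalIntegral.integral_of_le ha0, ofReal_integral_eq_lintegral_ofReal]
          · rw [← IntegrableOn, ← intervalIntegrable_iff_integrableOn_Ioc_of_le ha0]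
            apply ContinuousOn.intervalIntegrable
            apply ContinuousOn.div (by fun_prop) (by fun_prop)
            intro x hx
            rw [uIcc_of_le ha0] at hx
            linarith [hx.2]
          · filter_upwards [ae_restrict_mem measurableSet_Ioc] with x hx
            have : 0 < 1 - x := by linarith [hx.2]
            exact (one_div_pos.2 this).le
      _ ≤ _ := by
          rw [intervalIntegral.integral_comp_sub_left (fun x => 1 / x) 1, sub_zero,
            integral_one_div_of_pos h1a one_pos]
  · calc _ ≤ ∫⁻ r in Ioc a 1, ENNReal.ofReal ((1 - r) ^ α * (1 - a) ^ (-(α + 1))) := by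
          refine le_trans ?_ (lintegral_mono_set Ioo_subset_Ioc_self)
          apply setLIntegral_mono' measurableSet_Ioo
          intro r hr
          apply ENNReal.ofReal_le_ofReal
          have hr1 : 0 < 1 - r := by linarith [hr.2]
          have : 1 - a ≤ 1 - a * r := by nlinarith [hr.2]
          gcongr ?_ * ?_
          exact Real.rpow_le_rpow_of_nonpos h1a this (by linarith)
      _ = ENNReal.ofReal (∫ r in a..1, (1 - r) ^ α * (1 - a) ^ (-(α + 1))) := by
          rw [intervalIntegral.integral_of_le ha1.le, ofReal_integral_eq_lintegral_ofReal]
          · rw [← IntegrableOn, ← intervalIntegrable_iff_integrableOn_Ioc_of_le ha1.le]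
            apply IntervalIntegrable.mul_const
            have := (intervalIntegral.intervalIntegrable_rpow' hα (a := 1 - a) (b := 0)).comp_sub_left 1
            simpa using this
          · filter_upwards [ae_restrict_mem measurableSet_Ioc] with x hx
            have : 0 ≤ 1 - x := by linarith [hx.2]
            simp only [Pi.zero_apply]
            positivity
      _ ≤ _ := by
          apply ENNReal.ofReal_le_ofReal
          rw [intervalIntegral.integral_mul_const,
            intervalIntegral.integral_comp_sub_left (fun x => x ^ α) 1, sub_self,
            integral_rpow (Or.inl hα), Real.zero_rpow (by linarith), sub_zero,
            div_mul_eq_mul_div, ← Real.rpow_add h1a, add_neg_cancel, Real.rpow_zero]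

lemma norm_lower (ρ θ : ℝ) (h0 : 0 ≤ ρ) (h1 : ρ < 1) (hθ : |θ| ≤ Real.pi) :
    (1 - ρ + |θ|) / (2 * Real.pi) ≤ ‖1 - (ρ : ℂ) * Complex.exp (Complex.I * θ)‖ := by
  set N := ‖1 - (ρ : ℂ) * Complex.exp (Complex.I * θ)‖
  have hn : ‖Complex.exp (Complex.I * θ)‖ = 1 := by
    rw [mul_comm]; exact Complex.norm_exp_ofReal_mul_I θ
  have e1 : 1 - ρ ≤ N := by
    have := norm_sub_norm_le (1:ℂ) ((ρ : ℂ) * Complex.exp (Complex.I * θ))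
    rw [norm_mul, hn, norm_one, Complex.norm_real, Real.norm_of_nonneg h0, mul_one] at this
    exact this
  have e2 : ‖Complex.exp (Complex.I * θ) - 1‖ ≤ 2 * N := by
    have : Complex.exp (Complex.I * θ) - 1 =
      -(1 - (ρ : ℂ) * Complex.exp (Complex.I * θ)) +
        ((1 - ρ : ℝ) : ℂ) * Complex.exp (Complex.I * θ) := by push_cast; ring
    rw [this]
    refine (norm_add_le _ _).trans ?_
    rw [norm_neg, norm_mul, hn, Complex.norm_real, Real.norm_of_nonneg (by linarith)]
    linarith
  rw [Complex.norm_exp_I_mul_ofReal_sub_one, norm_mul, Real.norm_two, Real.norm_eq_abs] at e2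
  have e3 : 2 / Real.pi * |θ / 2| ≤ |Real.sin (θ / 2)| := by
    apply Real.mul_abs_le_abs_sin
    rw [abs_div, abs_two]; linarith
  rw [abs_div, abs_two] at e3
  have hpi := Real.pi_gt_three
  have e4 : |θ| / Real.pi ≤ N := by
    calc |θ| / Real.pi = 2 / Real.pi * (|θ| / 2) := by ring
      _ ≤ N := by linarith
  rw [div_le_iff₀ (by positivity)] at e4 ⊢
  nlinarith

lemma integrand_bound (α a r θ : ℝ) (hα : -1 < α) (ha0 : 0 ≤ a) (ha1 : a < 1)
    (hr0 : 0 < r) (hr1 : r < 1) (hθ : |θ| ≤ Real.pi) :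
    r * (‖1 - (a : ℂ) * ((r : ℂ) * Complex.exp (Complex.I * θ))‖ ^ (-(α + 2)) * (1 - r ^ 2) ^ α) ≤
      ((2 * Real.pi) ^ (α + 2) * 2 ^ |α|) * (1 - r) ^ α * (1 - a * r + |θ|) ^ (-(α + 2)) := by
  have har : a * r < 1 := by nlinarith
  have hpi := Real.pi_pos
  have hb : 0 < 1 - a * r + |θ| := by have := abs_nonneg θ; linarith
  have h1 := norm_lower (a * r) θ (by positivity) har hθ
  rw [Complex.ofReal_mul, mul_assoc] at h1
  have h2 := Real.rpow_le_rpow_of_nonpos (by positivity) h1 (show -(α + 2) ≤ 0 by linarith)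
  rw [Real.div_rpow hb.le (by positivity), Real.rpow_neg (show 0 ≤ 2 * Real.pi by positivity),
    div_inv_eq_mul] at h2
  have h1r : 0 < 1 - r := by linarith
  have h3 : (1 - r ^ 2) ^ α ≤ 2 ^ |α| * (1 - r) ^ α := by
    rw [show 1 - r ^ 2 = (1 + r) * (1 - r) by ring, Real.mul_rpow (by linarith) h1r.le]
    gcongr
    calc (1 + r) ^ α ≤ (1 + r) ^ |α| :=
          Real.rpow_le_rpow_of_exponent_le (by linarith) (le_abs_self α)
      _ ≤ 2 ^ |α| := Real.rpow_le_rpow (by linarith) (by linarith) (abs_nonneg _)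
  have h4 : 0 ≤ (1 - r ^ 2) ^ α := Real.rpow_nonneg (by nlinarith) _
  calc _ ≤ 1 * (‖1 - (a : ℂ) * ((r : ℂ) * Complex.exp (Complex.I * θ))‖ ^ (-(α + 2)) *
        (1 - r ^ 2) ^ α) := by gcongr
    _ ≤ 1 * (((1 - a * r + |θ|) ^ (-(α + 2)) * (2 * Real.pi) ^ (α + 2)) *
        (2 ^ |α| * (1 - r) ^ α)) := by gcongr
    _ = _ := by ring

lemma disk_int (α : ℝ) (hα : -1 < α) : ∃ M : ℝ, 0 < M ∧ ∀ a : ℝ, 0 ≤ a → a < 1 →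
    ∫⁻ ω in unitDisk, ENNReal.ofReal (‖1 - (a : ℂ) * ω‖ ^ (-(α + 2)) * (1 - ‖ω‖ ^ 2) ^ α) ≤
      ENNReal.ofReal (M * Real.log (2 / (1 - a ^ 2))) := by
  have hα1 : 0 < α + 1 := by linarith
  have hl2 : 0 < Real.log 2 := Real.log_pos (by norm_num)
  have hpi := Real.pi_pos
  set K : ℝ := (2 * Real.pi) ^ (α + 2) * 2 ^ |α| with hK
  have hK0 : 0 < K := by positivity
  refine ⟨K * (2 / (α + 1)) * (1 + 1 / ((α + 1) * Real.log 2)), by positivity, ?_⟩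
  intro a ha0 ha1
  have h1a : 0 < 1 - a := by linarith
  set f : ℂ → ℝ≥0∞ := unitDisk.indicator (fun ω =>
    ENNReal.ofReal (‖1 - (a : ℂ) * ω‖ ^ (-(α + 2)) * (1 - ‖ω‖ ^ 2) ^ α)) with hf
  set g : ℝ × ℝ → ℝ≥0∞ := fun q => (Ioo (0:ℝ) 1).indicator (fun r =>
    ENNReal.ofReal (K * (1 - r) ^ α) * ENNReal.ofReal ((1 - a * r + |q.2|) ^ (-(α + 2)))) q.1 with hg
  have hstep : ∫⁻ ω in unitDisk,
      ENNReal.ofReal (‖1 - (a : ℂ) * ω‖ ^ (-(α + 2)) * (1 - ‖ω‖ ^ 2) ^ α) ≤ ∫⁻ q, g q := by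
    rw [← lintegral_indicator (by exact measurableSet_ball), ← hf,
      ← Complex.lintegral_comp_polarCoord_symm]
    refine le_trans (setLIntegral_mono' polarCoord.open_target.measurableSet ?_)
      (setLIntegral_le_lintegral _ g)
    rintro ⟨r, θ⟩ hq
    rw [polarCoord_target] at hq
    obtain ⟨hr, hθ⟩ := hq
    simp only [mem_Ioi] at hr
    have hsymm : Complex.polarCoord.symm (r, θ) = (r : ℂ) * Complex.exp (Complex.I * θ) := by
      rw [Complex.polarCoord_symm_apply, mul_comm Complex.I, Complex.exp_mul_I]
      simp
    have hnorm : ‖Complex.polarCoord.symm (r, θ)‖ = r := by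
      rw [Complex.norm_polarCoord_symm, abs_of_pos hr]
    by_cases hr1 : r < 1
    · have hm : Complex.polarCoord.symm (r, θ) ∈ unitDisk := by
        rw [unitDisk, mem_ball_zero_iff, hnorm]; exact hr1
      simp only [hf, hg]
      rw [indicator_of_mem hm, indicator_of_mem (show r ∈ Ioo (0:ℝ) 1 from ⟨hr, hr1⟩), hnorm,
        hsymm, smul_eq_mul, ← ENNReal.ofReal_mul hr.le, ← ENNReal.ofReal_mul]
      · apply ENNReal.ofReal_le_ofReal
        exact integrand_bound α a r θ hα ha0 ha1 hr hr1 (abs_le.2 ⟨hθ.1.le, hθ.2.le⟩)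
      · have : 0 < 1 - r := by linarith
        positivity
    · have hm : Complex.polarCoord.symm (r, θ) ∉ unitDisk := by
        rw [unitDisk, mem_ball_zero_iff, hnorm]; exact hr1
      simp only [hf]
      rw [indicator_of_notMem hm]
      simp
  refine hstep.trans ((lintegral_prod_le g).trans ?_)
  have hθ : ∀ r, ∫⁻ θ, g (r, θ) ≤ (Ioo (0:ℝ) 1).indicator (fun r =>
      ENNReal.ofReal (K * (2 / (α + 1))) *
        ENNReal.ofReal ((1 - r) ^ α * (1 - a * r) ^ (-(α + 1)))) r := by
    intro r
    by_cases hr : r ∈ Ioo (0:ℝ) 1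
    · simp only [hg, indicator_of_mem hr]
      have h1r : 0 < 1 - r := by linarith [hr.2]
      have har : 0 < 1 - a * r := by nlinarith [hr.1, hr.2]
      rw [lintegral_const_mul' _ _ ENNReal.ofReal_ne_top]
      refine (mul_le_mul_right (theta_int (α + 2) (1 - a * r) (by linarith) har) _).trans ?_
      rw [← ENNReal.ofReal_mul (by positivity), ← ENNReal.ofReal_mul (by positivity)]
      apply ENNReal.ofReal_le_ofReal
      rw [show 1 - (α + 2) = -(α + 1) by ring, show α + 2 - 1 = α + 1 by ring]
      apply le_of_eq
      ring
    · simp [hg, indicator_of_notMem hr]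
  refine (lintegral_mono hθ).trans ?_
  rw [lintegral_indicator measurableSet_Ioo, lintegral_const_mul' _ _ ENNReal.ofReal_ne_top]
  refine (mul_le_mul_right (radial_int α a hα ha0 ha1) _).trans ?_
  rw [← ENNReal.ofReal_mul (by positivity)]
  apply ENNReal.ofReal_le_ofReal
  rw [mul_assoc (K * (2 / (α + 1)))]
  gcongr
  have hsq : 0 < 1 - a ^ 2 := by nlinarith
  have e1 : Real.log (1 / (1 - a)) ≤ Real.log (2 / (1 - a ^ 2)) := by
    apply Real.log_le_log (by positivity)
    rw [div_le_div_iff₀ h1a hsq]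
    nlinarith
  have e2 : Real.log 2 ≤ Real.log (2 / (1 - a ^ 2)) := by
    apply Real.log_le_log (by positivity)
    rw [le_div_iff₀ hsq]
    nlinarith
  have e3 : 1 / (α + 1) ≤ 1 / ((α + 1) * Real.log 2) * Real.log (2 / (1 - a ^ 2)) := by
    rw [div_mul_eq_mul_div, div_le_div_iff₀ hα1 (by positivity)]
    nlinarith
  linarith

lemma disk_int_rot (α : ℝ) (z : ℂ) :
    ∫⁻ ω in unitDisk,
      ENNReal.ofReal (‖1 - (starRingEnd ℂ) z * ω‖ ^ (-(α + 2)) * (1 - ‖ω‖ ^ 2) ^ α) =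
    ∫⁻ ω in unitDisk,
      ENNReal.ofReal (‖1 - ((‖z‖ : ℝ) : ℂ) * ω‖ ^ (-(α + 2)) * (1 - ‖ω‖ ^ 2) ^ α) := by
  set u : Circle := Circle.exp z.arg
  have hu : (starRingEnd ℂ) z * u = ((‖z‖ : ℝ) : ℂ) := by
    have hz : z = ‖z‖ * (u : ℂ) := by
      rw [Circle.coe_exp]; exact (Complex.norm_mul_exp_arg_mul_I z).symm
    have hs : (starRingEnd ℂ) (u : ℂ) * u = 1 := by
      rw [mul_comm, Complex.mul_conj, Circle.normSq_coe, Complex.ofReal_one]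
    calc (starRingEnd ℂ) z * u = (starRingEnd ℂ) (‖z‖ * (u : ℂ)) * u := by rw [← hz]
      _ = ‖z‖ * ((starRingEnd ℂ) (u : ℂ) * u) := by rw [map_mul, Complex.conj_ofReal]; ring
      _ = _ := by rw [hs, mul_one]
  have hmp := (rotation u).measurePreserving
  rw [← lintegral_indicator (by exact measurableSet_ball),
    ← lintegral_indicator (by exact measurableSet_ball),
    ← hmp.lintegral_comp_emb (rotation u).toHomeomorph.measurableEmbedding]
  apply lintegral_congr
  intro ω
  simp only [indicator, unitDisk, mem_ball_zero_iff, rotation_apply,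
    ← mul_assoc, hu, norm_mul, Circle.norm_coe, one_mul]

/-- For `p = α + 2` the logarithmic test functions have uniformly bounded `D^p_α` norm. -/
theorem testFnLog_dirichlet_bounded (p α : ℝ) (hα : -1 < α) (hpα : p = α + 2) :
    ∃ C : ℝ, 0 < C ∧ ∀ z ∈ unitDisk,
      MemDirichlet p α (testFnLog p z) ∧ dirichletNorm p α (testFnLog p z) ≤ C := by
  obtain ⟨M, hM, hMb⟩ := disk_int α hα
  have hl2 : 0 < Real.log 2 := Real.log_pos (by norm_num)
  have hpi := Real.pi_pos
  have hp : 0 < p := by linarith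
  refine ⟨(Real.log 2 ^ p / Real.log 2 + Real.pi⁻¹ * M) ^ (1 / p), by positivity, ?_⟩
  intro z hz
  rw [unitDisk, mem_ball_zero_iff] at hz
  have hsq : 0 < 1 - ‖z‖ ^ 2 := by nlinarith [norm_nonneg z]
  set L := Real.log (2 / (1 - ‖z‖ ^ 2)) with hL
  have hLl : Real.log 2 ≤ L := by
    apply Real.log_le_log (by positivity)
    rw [le_div_iff₀ hsq]
    nlinarith [sq_nonneg ‖z‖]
  have hL0 : 0 < L := by linarith
  have hLp : 0 < L ^ (1 / p) := by positivity
  have hLpp : (L ^ (1 / p)) ^ p = L := by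
    rw [← Real.rpow_mul hL0.le, one_div_mul_cancel hp.ne', Real.rpow_one]
  have hderiv : ∀ ω ∈ unitDisk, HasDerivAt (testFnLog p z)
      ((starRingEnd ℂ) z / (1 - (starRingEnd ℂ) z * ω) / ((L ^ (1 / p) : ℝ) : ℂ)) ω := by
    intro ω hω
    rw [unitDisk, mem_ball_zero_iff] at hω
    have hlt : ‖(starRingEnd ℂ) z * ω‖ < 1 := by
      rw [norm_mul, RCLike.norm_conj]
      nlinarith [norm_nonneg z, norm_nonneg ω]
    have hre : 0 < (1 - (starRingEnd ℂ) z * ω).re := by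
      have := Complex.re_le_norm ((starRingEnd ℂ) z * ω)
      rw [Complex.sub_re, Complex.one_re]; linarith
    have hne : 1 - (starRingEnd ℂ) z * ω ≠ 0 := by
      intro h; rw [h] at hre; simp at hre
    have hslit : 2 / (1 - (starRingEnd ℂ) z * ω) ∈ Complex.slitPlane := by
      left
      have := Complex.normSq_pos.2 hne
      rw [div_eq_mul_inv, show (2:ℂ) = ((2:ℝ) : ℂ) by simp, Complex.re_ofReal_mul,
        Complex.inv_re]
      positivity
    have h1 : HasDerivAt (fun ω => 1 - (starRingEnd ℂ) z * ω) (-((starRingEnd ℂ) z)) ω := by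
      simpa using ((hasDerivAt_id ω).const_mul ((starRingEnd ℂ) z)).const_sub 1
    have h2 := (((hasDerivAt_const ω (2:ℂ)).div h1 hne).clog hslit).div_const
      (((L ^ (1 / p) : ℝ) : ℂ))
    refine h2.congr_deriv ?_
    congr 1
    simp only [Pi.div_apply]
    field_simp
    ring
  have hint : dirichletLintegral p α (testFnLog p z) ≤ ENNReal.ofReal (Real.pi⁻¹ * M) := by
    rw [dirichletLintegral, areaMeasure, Measure.restrict_smul, lintegral_smul_measure,
      ENNReal.ofReal_mul (by positivity), smul_eq_mul]
    refine mul_le_mul_right ?_ _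
    calc _ ≤ ∫⁻ ω in unitDisk, ENNReal.ofReal (1 / L) * ENNReal.ofReal
            (‖1 - (starRingEnd ℂ) z * ω‖ ^ (-(α + 2)) * (1 - ‖ω‖ ^ 2) ^ α) := by
          apply setLIntegral_mono' (by exact measurableSet_ball)
          intro ω hω
          rw [(hderiv ω hω).deriv, ← ENNReal.ofReal_mul (by positivity)]
          apply ENNReal.ofReal_le_ofReal
          rw [unitDisk, mem_ball_zero_iff] at hω
          have hw : 0 ≤ (1 - ‖ω‖ ^ 2) ^ α :=
            Real.rpow_nonneg (by nlinarith [norm_nonneg ω]) _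
          rw [norm_div, norm_div, Complex.norm_real, Real.norm_of_nonneg hLp.le, RCLike.norm_conj,
            Real.div_rpow (by positivity) hLp.le, hLpp, Real.div_rpow (by positivity)
            (by positivity), ← mul_assoc, ← hpα, Real.rpow_neg (norm_nonneg _)]
          have : ‖z‖ ^ p ≤ 1 := Real.rpow_le_one (norm_nonneg _) hz.le hp.le
          gcongr
          rw [div_eq_mul_inv, mul_comm (1 / L), div_eq_mul_one_div _ L]
          gcongr ?_ * ?_
          · exact mul_le_of_le_one_left (by positivity) this
          · simp
      _ ≤ ENNReal.ofReal (1 / L) * ENNReal.ofReal (M * L) := by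
          rw [lintegral_const_mul' _ _ ENNReal.ofReal_ne_top, disk_int_rot]
          exact mul_le_mul_right (hMb ‖z‖ (norm_nonneg _) hz) _
      _ = ENNReal.ofReal M := by
          rw [← ENNReal.ofReal_mul (by positivity)]
          congr 1
          field_simp
  refine ⟨⟨fun ω hω => (hderiv ω hω).differentiableAt.differentiableWithinAt,
    hint.trans_lt ENNReal.ofReal_lt_top⟩, ?_⟩
  rw [dirichletNorm]
  have h0 : ‖testFnLog p z 0‖ ^ p ≤ Real.log 2 ^ p / Real.log 2 := by
    have : Complex.log 2 = ((Real.log 2 : ℝ) : ℂ) := by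
      rw [Complex.ofReal_log (by norm_num)]; simp
    rw [testFnLog, mul_zero, sub_zero, div_one, ← hL, this, norm_div, Complex.norm_real,
      Complex.norm_real, Real.norm_of_nonneg hl2.le, Real.norm_of_nonneg hLp.le,
      Real.div_rpow hl2.le hLp.le, hLpp]
    gcongr
  have h1 : (dirichletLintegral p α (testFnLog p z)).toReal ≤ Real.pi⁻¹ * M :=
    ENNReal.toReal_le_of_le_ofReal (by positivity) hint
  gcongr
end
end

section
/- Let 0 < p < 1. For z ∈ 𝔻 define f_z(ω) = (1-|z|²)^{1/p} / (1-z̄ω)^{2/p-1} for ω ∈ 𝔻. Then there is a constant C > 0 independent of z such that ‖f_z‖_{S^p} ≤ C for all z ∈ 𝔻, and f_z(z) = 1/(1-|z|²)^{1/p-1}. -/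
open MeasureTheory Metric Set Filter Topology ENNReal

noncomputable section

/-- The normalized Lebesgue measure on the unit circle, parameterized by the angle
`θ ∈ (0, 2π]`. -/
def circleMeasure : Measure ℝ :=
  (ENNReal.ofReal (2 * Real.pi)⁻¹) • (volume.restrict (Set.Ioc 0 (2 * Real.pi)))

/-- `∫_{∂𝔻} |f(r ξ)|^p dm(ξ)`, as an extended nonnegative real. -/
def hardyLintegral (p : ℝ) (f : ℂ → ℂ) (r : ℝ) : ℝ≥0∞ :=
  ∫⁻ θ, ENNReal.ofReal (‖f ((r : ℂ) * Complex.exp ((θ : ℂ) * Complex.I))‖ ^ p) ∂circleMeasure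

/-- `sup_{0 ≤ r < 1} ∫_{∂𝔻} |f(r ξ)|^p dm(ξ)`. -/
def hardySup (p : ℝ) (f : ℂ → ℂ) : ℝ≥0∞ :=
  ⨆ r : Set.Ico (0 : ℝ) 1, hardyLintegral p f r

/-- Membership in the derivative Hardy space `S^p`: analytic on 𝔻 with `f' ∈ H^p`. -/
def MemS (p : ℝ) (f : ℂ → ℂ) : Prop :=
  DifferentiableOn ℂ f unitDisk ∧ hardySup p (deriv f) < ⊤

/-- The norm of the derivative Hardy space `S^p`: `|f(0)| + ‖f'‖_{H^p}`. -/
def sNorm (p : ℝ) (f : ℂ → ℂ) : ℝ :=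
  ‖f 0‖ + ((hardySup p (deriv f)).toReal) ^ (1 / p)

/-- The test function `f_z(ω) = (1-|z|²)^{1/p} / (1 - z̄ω)^{2/p - 1}`. -/
def testFnS (p : ℝ) (z : ℂ) : ℂ → ℂ := fun ω =>
  (((1 - ‖z‖ ^ 2) ^ (1 / p) : ℝ) : ℂ) /
    (1 - (starRingEnd ℂ) z * ω) ^ ((2 / p - 1 : ℝ) : ℂ)

lemma aux_poisson (w : ℂ) (hw : ‖w‖ < 1) :
    ∫⁻ θ, ENNReal.ofReal ((1 - ‖w‖ ^ 2) / ‖Complex.exp ((θ : ℂ) * Complex.I) - w‖ ^ 2)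
      ∂circleMeasure = 1 := by
  have hne : ∀ θ : ℝ, Complex.exp ((θ : ℂ) * Complex.I) - w ≠ 0 := by
    intro θ h
    have h1 := Complex.norm_exp_ofReal_mul_I θ
    rw [sub_eq_zero.mp h] at h1
    linarith
  have hcont : Continuous fun θ : ℝ =>
      (1 - ‖w‖ ^ 2) / ‖Complex.exp ((θ : ℂ) * Complex.I) - w‖ ^ 2 := by
    refine Continuous.div continuous_const (by fun_prop) ?_
    intro θ
    exact pow_ne_zero _ (norm_ne_zero_iff.mpr (hne θ))
  have hnn : ∀ θ : ℝ, 0 ≤ (1 - ‖w‖ ^ 2) / ‖Complex.exp ((θ : ℂ) * Complex.I) - w‖ ^ 2 := by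
    intro θ
    have : 0 ≤ 1 - ‖w‖ ^ 2 := by nlinarith [norm_nonneg w]
    positivity
  have hP := DiffContOnCl.circleAverage_poissonKernel_smul (c := 0) (R := 1) (w := w)
    (f := fun _ => (1 : ℂ)) diffContOnCl_const (by simpa using hw)
  have hI : (2 * Real.pi)⁻¹ * ∫ θ in (0 : ℝ)..(2 * Real.pi),
      (1 - ‖w‖ ^ 2) / ‖Complex.exp ((θ : ℂ) * Complex.I) - w‖ ^ 2 = 1 := by
    rw [Real.circleAverage_def] at hP
    simp only [Pi.smul_apply', circleMap, poissonKernel_def, sub_zero, zero_add, Complex.ofReal_one,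
      one_mul, Complex.norm_exp_ofReal_mul_I, one_pow, Complex.real_smul, mul_one] at hP
    rw [intervalIntegral.integral_ofReal] at hP
    exact_mod_cast hP
  unfold circleMeasure
  rw [lintegral_smul_measure, ← ofReal_integral_eq_lintegral_ofReal, smul_eq_mul,
    ← intervalIntegral.integral_of_le (by positivity), ← ENNReal.ofReal_mul (by positivity), hI,
    ENNReal.ofReal_one]
  · exact (hcont.integrableOn_Icc (a := 0) (b := 2 * Real.pi)).mono_set Ioc_subset_Icc_self
  · exact Eventually.of_forall hnn

lemma aux_slit (z ω : ℂ) (hz : ‖z‖ < 1) (hω : ‖ω‖ < 1) :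
    1 - (starRingEnd ℂ) z * ω ∈ Complex.slitPlane := by
  left
  have h1 : ((starRingEnd ℂ) z * ω).re ≤ ‖(starRingEnd ℂ) z * ω‖ := Complex.re_le_norm _
  rw [norm_mul, RCLike.norm_conj] at h1
  simp only [Complex.sub_re, Complex.one_re]
  nlinarith [norm_nonneg z, norm_nonneg ω]

lemma aux_deriv (p : ℝ) (z ω : ℂ) (hz : ‖z‖ < 1) (hω : ‖ω‖ < 1) :
    HasDerivAt (testFnS p z) ((((1 - ‖z‖ ^ 2) ^ (1 / p) : ℝ) : ℂ) *
      ((-(2 / p - 1) : ℝ) * (1 - (starRingEnd ℂ) z * ω) ^ ((-(2 / p) : ℝ) : ℂ) *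
        (-(starRingEnd ℂ) z))) ω := by
  have hs := aux_slit z ω hz hω
  have h1 : HasDerivAt (fun ω => 1 - (starRingEnd ℂ) z * ω) (-(starRingEnd ℂ) z) ω := by
    simpa using ((hasDerivAt_id ω).const_mul ((starRingEnd ℂ) z)).const_sub 1
  have h2 := (h1.cpow_const (c := ((-(2 / p - 1) : ℝ) : ℂ)) hs).const_mul
    (((1 - ‖z‖ ^ 2) ^ (1 / p) : ℝ) : ℂ)
  have e1 : testFnS p z = fun y => (((1 - ‖z‖ ^ 2) ^ (1 / p) : ℝ) : ℂ) *
      (1 - (starRingEnd ℂ) z * y) ^ ((-(2 / p - 1) : ℝ) : ℂ) := by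
    funext x
    simp only [testFnS, Complex.ofReal_neg, Complex.cpow_neg, div_eq_mul_inv]
  have e2 : ((-(2 / p) : ℝ) : ℂ) = ((-(2 / p - 1) : ℝ) : ℂ) - 1 := by
    push_cast
    ring
  rw [e1, e2]
  exact h2

lemma aux_normle (p : ℝ) (hp : 0 < p) (hp1 : p < 1) (z : ℂ) (hz : ‖z‖ < 1) (r : ℝ) (hr0 : 0 ≤ r)
    (hr1 : r < 1) (θ : ℝ) :
    ‖deriv (testFnS p z) ((r : ℂ) * Complex.exp ((θ : ℂ) * Complex.I))‖ ^ p ≤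
      (2 / p - 1) ^ p * ((1 - ‖(r : ℂ) * z‖ ^ 2) /
        ‖Complex.exp ((θ : ℂ) * Complex.I) - (r : ℂ) * z‖ ^ 2) := by
  have hK : 0 < 2 / p - 1 := by
    have : 1 < 2 / p := by rw [lt_div_iff₀ hp]; linarith
    linarith
  set e := Complex.exp ((θ : ℂ) * Complex.I) with he
  have hen : ‖e‖ = 1 := Complex.norm_exp_ofReal_mul_I θ
  have hω : ‖(r : ℂ) * e‖ < 1 := by
    rw [norm_mul, hen, Complex.norm_real, Real.norm_of_nonneg hr0]; simpa using hr1
  have hz2 : 0 < 1 - ‖z‖ ^ 2 := by nlinarith [norm_nonneg z]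
  rw [(aux_deriv p z _ hz hω).deriv]
  have hne := Complex.slitPlane_ne_zero (aux_slit z _ hz hω)
  have hnpos : 0 < ‖1 - (starRingEnd ℂ) z * (r * e)‖ := norm_pos_iff.mpr hne
  have hnorm : ‖e - (r : ℂ) * z‖ = ‖1 - (starRingEnd ℂ) z * (r * e)‖ := by
    have hee : e * (starRingEnd ℂ) e = 1 := by
      rw [Complex.mul_conj, Complex.normSq_eq_norm_sq, hen]; simp
    have : e - (r : ℂ) * z = e * (starRingEnd ℂ) (1 - (starRingEnd ℂ) z * (r * e)) := by
      simp only [map_sub, map_one, map_mul, Complex.conj_conj, Complex.conj_ofReal]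
      linear_combination (r : ℂ) * z * hee
    rw [this, norm_mul, hen, one_mul, RCLike.norm_conj]
  rw [hnorm]
  set N := ‖1 - (starRingEnd ℂ) z * (r * e)‖ with hN
  have hA : 0 ≤ (1 - ‖z‖ ^ 2) ^ (1 / p) := by positivity
  rw [norm_mul, norm_mul, norm_mul, norm_neg, RCLike.norm_conj, Complex.norm_cpow_real,
    Complex.norm_real, Complex.norm_real, norm_neg, Real.norm_of_nonneg hA,
    Real.norm_of_nonneg hK.le, Real.mul_rpow hA (by positivity),
    Real.mul_rpow (by positivity) (by positivity), Real.mul_rpow (by positivity) (by positivity),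
    ← Real.rpow_mul hz2.le, ← Real.rpow_mul hnpos.le, one_div_mul_cancel hp.ne', Real.rpow_one]
  have h2 : -(2 / p) * p = -(2 : ℝ) := by field_simp
  rw [h2, Real.rpow_neg hnpos.le, Real.rpow_two, norm_mul, Complex.norm_real,
    Real.norm_of_nonneg hr0]
  have hzp : ‖z‖ ^ p ≤ 1 := Real.rpow_le_one (norm_nonneg z) hz.le hp.le
  have hle : 1 - ‖z‖ ^ 2 ≤ 1 - (r * ‖z‖) ^ 2 := by
    have : r * ‖z‖ ≤ ‖z‖ := by nlinarith [norm_nonneg z]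
    have h0 : 0 ≤ r * ‖z‖ := by positivity
    nlinarith
  have hKp : 0 ≤ (2 / p - 1) ^ p := by positivity
  calc (1 - ‖z‖ ^ 2) * ((2 / p - 1) ^ p * (N ^ 2)⁻¹ * ‖z‖ ^ p)
      ≤ (1 - ‖z‖ ^ 2) * ((2 / p - 1) ^ p * (N ^ 2)⁻¹ * 1) := by gcongr
    _ = (2 / p - 1) ^ p * ((1 - ‖z‖ ^ 2) / N ^ 2) := by rw [div_eq_mul_inv]; ring
    _ ≤ _ := by gcongr

lemma aux_sup (p : ℝ) (hp : 0 < p) (hp1 : p < 1) (z : ℂ) (hz : ‖z‖ < 1) :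
    hardySup p (deriv (testFnS p z)) ≤ ENNReal.ofReal ((2 / p - 1) ^ p) := by
  have hK : 0 < 2 / p - 1 := by
    have : 1 < 2 / p := by rw [lt_div_iff₀ hp]; linarith
    linarith
  refine iSup_le ?_
  rintro ⟨r, hr0, hr1⟩
  have hw : ‖(r : ℂ) * z‖ < 1 := by
    rw [norm_mul, Complex.norm_real, Real.norm_of_nonneg hr0]
    nlinarith [norm_nonneg z]
  calc hardyLintegral p (deriv (testFnS p z)) r
      ≤ ∫⁻ θ, ENNReal.ofReal ((2 / p - 1) ^ p) * ENNReal.ofReal ((1 - ‖(r : ℂ) * z‖ ^ 2) /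
        ‖Complex.exp ((θ : ℂ) * Complex.I) - (r : ℂ) * z‖ ^ 2) ∂circleMeasure := by
        refine lintegral_mono fun θ => ?_
        rw [← ENNReal.ofReal_mul (by positivity)]
        exact ENNReal.ofReal_le_ofReal (aux_normle p hp hp1 z hz r hr0 hr1 θ)
    _ = _ := by
        rw [lintegral_const_mul' _ _ ENNReal.ofReal_ne_top, aux_poisson _ hw, mul_one]

/-- For `0 < p < 1`, the test functions `f_z` have uniformly bounded `S^p` norm, with
`f_z(z) = (1-|z|²)^{-(1/p-1)}`. -/
theorem testFnS_bounded (p : ℝ) (hp : 0 < p) (hp1 : p < 1) :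
    ∃ C : ℝ, 0 < C ∧ ∀ z ∈ unitDisk,
      MemS p (testFnS p z) ∧
      sNorm p (testFnS p z) ≤ C ∧
      testFnS p z z = ((1 / (1 - ‖z‖ ^ 2) ^ (1 / p - 1) : ℝ) : ℂ) := by
  have hK : 0 < 2 / p - 1 := by
    have : 1 < 2 / p := by rw [lt_div_iff₀ hp]; linarith
    linarith
  refine ⟨1 + (2 / p - 1), by positivity, ?_⟩
  intro z hz'
  have hz : ‖z‖ < 1 := by simpa [unitDisk] using hz'
  have hz2 : 0 < 1 - ‖z‖ ^ 2 := by nlinarith [norm_nonneg z]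
  have hsup := aux_sup p hp hp1 z hz
  refine ⟨⟨?_, lt_of_le_of_lt hsup ENNReal.ofReal_lt_top⟩, ?_, ?_⟩
  · intro ω hω
    have hω1 : ‖ω‖ < 1 := by simpa [unitDisk] using hω
    exact (aux_deriv p z ω hz hω1).differentiableAt.differentiableWithinAt
  · unfold sNorm
    refine add_le_add ?_ ?_
    · simp only [testFnS, mul_zero, sub_zero, Complex.one_cpow, div_one]
      rw [Complex.norm_real, Real.norm_of_nonneg (by positivity)]
      exact Real.rpow_le_one hz2.le (by nlinarith [norm_nonneg z]) (by positivity)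
    · have h1 : (hardySup p (deriv (testFnS p z))).toReal ≤ (2 / p - 1) ^ p :=
        ENNReal.toReal_le_of_le_ofReal (by positivity) hsup
      calc _ ≤ ((2 / p - 1) ^ p) ^ (1 / p) :=
            Real.rpow_le_rpow ENNReal.toReal_nonneg h1 (by positivity)
        _ = 2 / p - 1 := by
            rw [← Real.rpow_mul hK.le, mul_one_div_cancel hp.ne', Real.rpow_one]
  · have h1 : 1 - (starRingEnd ℂ) z * z = ((1 - ‖z‖ ^ 2 : ℝ) : ℂ) := by
      rw [mul_comm, Complex.mul_conj, Complex.normSq_eq_norm_sq]; push_cast; ring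
    simp only [testFnS]
    rw [h1, ← Complex.ofReal_cpow hz2.le, ← Complex.ofReal_div]
    congr 1
    rw [← Real.rpow_sub hz2, one_div (_ ^ _), ← Real.rpow_neg hz2.le]
    congr 1
    ring
end
end

section
/- Let 0 < p < 1. Then there is a constant C > 0 such that for every f in the derivative Hardy space S^p and every z ∈ 𝔻, |f(z)| ≤ C ‖f‖_{S^p} / (1-|z|²)^{1/p-1}. -/
open MeasureTheory Metric Set Filter Topology ENNReal

noncomputable section

lemma aux_per1 (h : ℝ → ℝ) (hc : Continuous h) (h0 : ∀ x, 0 ≤ h x)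
    (hper : Function.Periodic h (2 * Real.pi)) :
    ∫⁻ θ in Ioo (-Real.pi) Real.pi, ENNReal.ofReal (h θ)
      = ENNReal.ofReal (∫ θ in (0:ℝ)..(2 * Real.pi), h θ) := by
  have h1 := hper.intervalIntegral_add_eq 0 (-Real.pi)
  have e : -Real.pi + 2 * Real.pi = Real.pi := by ring
  rw [zero_add, e] at h1
  rw [h1, intervalIntegral.integral_of_le (by linarith [Real.pi_pos]),
    ofReal_integral_eq_lintegral_ofReal, setLIntegral_congr Ioo_ae_eq_Ioc]
  · exact (hc.integrableOn_Icc (a := -Real.pi) (b := Real.pi)).mono_set Ioc_subset_Icc_self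
  · exact Eventually.of_forall h0

lemma aux_per2 (h : ℝ → ℝ) (hc : Continuous h) (h0 : ∀ x, 0 ≤ h x) :
    ∫⁻ θ in Ioc 0 (2 * Real.pi), ENNReal.ofReal (h θ)
      = ENNReal.ofReal (∫ θ in (0:ℝ)..(2 * Real.pi), h θ) := by
  rw [intervalIntegral.integral_of_le (by linarith [Real.pi_pos]),
    ofReal_integral_eq_lintegral_ofReal]
  · exact (hc.integrableOn_Icc (a := 0) (b := 2 * Real.pi)).mono_set Ioc_subset_Icc_self
  · exact Eventually.of_forall h0

lemma aux_polar (G : ℂ → ℝ≥0∞) (hG : Measurable G) :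
    ∫⁻ w, G w = ∫⁻ r in Ioi (0:ℝ), ∫⁻ θ in Ioo (-Real.pi) Real.pi,
      ENNReal.ofReal r * G (circleMap 0 r θ) := by
  rw [← Complex.lintegral_comp_polarCoord_symm, polarCoord_target, Measure.volume_eq_prod]
  have e : ∀ q : ℝ × ℝ, Complex.polarCoord.symm q = circleMap 0 q.1 q.2 := by
    intro q
    rw [Complex.polarCoord_symm_apply, circleMap, Complex.exp_mul_I, zero_add]
    simp
  simp_rw [e, smul_eq_mul]
  rw [setLIntegral_prod]
  apply Measurable.aemeasurable
  have : Measurable fun q : ℝ × ℝ => circleMap 0 q.1 q.2 := by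
    apply Continuous.measurable
    unfold circleMap
    fun_prop
  have := hG.comp this
  simp only [Function.comp_def] at this
  fun_prop

lemma aux_submean (p : ℝ) (hp : 0 < p) (g : ℂ → ℂ) (c : ℂ) (R : ℝ) (hR : 0 < R)
    (hg : AnalyticOnNhd ℂ g (closedBall c R)) :
    ‖g c‖ ^ p ≤ Real.circleAverage (fun w => ‖g w‖ ^ p) c R := by
  have hcont : ContinuousOn (fun w => ‖g w‖ ^ p) (sphere c R) := by
    have := (hg.continuousOn.mono sphere_subset_closedBall).norm
    exact this.rpow_const (fun _ _ => Or.inr hp.le)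
  by_cases h0 : g c = 0
  · rw [h0, norm_zero, Real.zero_rpow hp.ne']
    apply Real.circleAverage_nonneg_of_nonneg
    intro x _
    positivity
  have hg' : AnalyticOnNhd ℂ g (closedBall c |R|) := by rwa [abs_of_pos hR]
  have hJ := hg'.circleAverage_log_norm hR.ne' h0
  have hS : 0 ≤ ∑ᶠ u, (MeromorphicOn.divisor g (closedBall c |R|) u : ℝ) *
      Real.log (R * ‖c - u‖⁻¹) := by
    apply finsum_nonneg
    intro u
    by_cases hu : u ∈ closedBall c |R|
    · apply mul_nonneg
      · have := MeromorphicOn.AnalyticOnNhd.divisor_nonneg hg' u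
        exact_mod_cast this
      · by_cases hcu : c = u
        · simp [hcu]
        have : 0 < ‖c - u‖ := norm_pos_iff.2 (sub_ne_zero.2 hcu)
        apply Real.log_nonneg
        rw [← div_eq_mul_inv, one_le_div this, ← dist_eq_norm, dist_comm]
        rwa [mem_closedBall, abs_of_pos hR] at hu
    · rw [Function.locallyFinsuppWithin.apply_eq_zero_of_notMem _ hu]
      simp
  set m := ‖g c‖ ^ p with hm
  have hgc : 0 < ‖g c‖ := norm_pos_iff.2 h0
  have hmpos : 0 < m := by positivity
  set h : ℂ → ℝ := fun w => (m * (1 - p * Real.log ‖g c‖)) + (m * p) * Real.log ‖g w‖ with hh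
  have hlogint : CircleIntegrable (fun w => Real.log ‖g w‖) c R :=
    (hg'.mono sphere_subset_closedBall).meromorphicOn.circleIntegrable_log_norm
  have hint2 : CircleIntegrable (fun w => (m * p) • Real.log ‖g w‖) c R := hlogint.const_smul
  have hint : CircleIntegrable h c R := by
    exact (circleIntegrable_const _ c R).add hint2
  have hav : m ≤ Real.circleAverage h c R := by
    have : Real.circleAverage h c R = (m * (1 - p * Real.log ‖g c‖))
        + (m * p) * Real.circleAverage (fun w => Real.log ‖g w‖) c R := by
      have := Real.circleAverage_fun_add (circleIntegrable_const (m * (1 - p * Real.log ‖g c‖)) c R)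
        hint2
      rw [Real.circleAverage_const, Real.circleAverage_fun_smul] at this
      exact this
    rw [this, hJ]
    have : 0 ≤ m * p * ∑ᶠ u, (MeromorphicOn.divisor g (closedBall c |R|) u : ℝ) *
      Real.log (R * ‖c - u‖⁻¹) := mul_nonneg (by positivity) hS
    nlinarith
  classical
  set k : ℂ → ℝ := fun w => if g w = 0 then 0 else h w with hk
  have hcod : h =ᶠ[codiscreteWithin (sphere c |R|)] k := by
    have := hg'.preimage_zero_mem_codiscreteWithin (x := c) h0 (by simp)
      ⟨nonempty_closedBall.mpr (abs_nonneg R), (convex_closedBall c |R|).isPreconnected⟩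
    have := codiscreteWithin_mono (sphere_subset_closedBall (x := c) (ε := |R|)) this
    filter_upwards [this] with w hw
    have : g w ≠ 0 := by simpa using hw
    simp [hk, this]
  have hkint : CircleIntegrable k c R := hint.congr_codiscreteWithin hcod
  rw [Real.circleAverage_congr_codiscreteWithin hcod hR.ne'] at hav
  refine hav.trans (Real.circleAverage_mono hkint ?_ ?_)
  · exact hcont.circleIntegrable hR.le
  · intro w _
    simp only [hk]
    split_ifs with hw
    · positivity
    · have hw' : 0 < ‖g w‖ := norm_pos_iff.2 hw
      have e1 := Real.add_one_le_exp (p * Real.log ‖g w‖ - p * Real.log ‖g c‖)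
      have e2 : ‖g w‖ ^ p = m * Real.exp (p * Real.log ‖g w‖ - p * Real.log ‖g c‖) := by
        rw [hm, Real.rpow_def_of_pos hw', Real.rpow_def_of_pos hgc, ← Real.exp_add]
        congr 1; ring
      rw [e2, hh]
      nlinarith

lemma aux_circle_lintegral (p : ℝ) (hp : 0 < p) (g : ℂ → ℂ) (c : ℂ) (R : ℝ)
    (hg : ContinuousOn g (sphere c |R|)) :
    ∫⁻ θ in Ioo (-Real.pi) Real.pi, ENNReal.ofReal (‖g (circleMap c R θ)‖ ^ p)
      = ENNReal.ofReal (2 * Real.pi * Real.circleAverage (fun w => ‖g w‖ ^ p) c R) ∧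
    ∫⁻ θ in Ioc 0 (2 * Real.pi), ENNReal.ofReal (‖g (circleMap c R θ)‖ ^ p)
      = ENNReal.ofReal (2 * Real.pi * Real.circleAverage (fun w => ‖g w‖ ^ p) c R) := by
  have hc : Continuous fun θ => ‖g (circleMap c R θ)‖ ^ p := by
    have : Continuous fun θ => g (circleMap c R θ) :=
      hg.comp_continuous (continuous_circleMap c R) (fun θ => circleMap_mem_sphere' c R θ)
    exact this.norm.rpow_const (fun _ => Or.inr hp.le)
  have hper : Function.Periodic (fun θ => ‖g (circleMap c R θ)‖ ^ p) (2 * Real.pi) := by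
    intro θ
    simp only [periodic_circleMap c R θ]
  have e : 2 * Real.pi * Real.circleAverage (fun w => ‖g w‖ ^ p) c R
      = ∫ θ in (0:ℝ)..(2 * Real.pi), ‖g (circleMap c R θ)‖ ^ p := by
    rw [Real.circleAverage_def, smul_eq_mul, mul_inv_cancel_left₀]
    positivity
  rw [e]
  exact ⟨aux_per1 _ hc (fun _ => by positivity) hper, aux_per2 _ hc (fun _ => by positivity)⟩

lemma aux_hardy (p : ℝ) (hp : 0 < p) (g : ℂ → ℂ) (hg : ContinuousOn g (ball 0 1))
    (r : ℝ) (hr : 0 ≤ r) (hr1 : r < 1) :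
    ∫⁻ θ in Ioo (-Real.pi) Real.pi, ENNReal.ofReal (‖g (circleMap 0 r θ)‖ ^ p)
      ≤ ENNReal.ofReal (2 * Real.pi) * hardySup p g := by
  have hs : sphere (0:ℂ) |r| ⊆ ball 0 1 := by
    intro w hw
    rw [abs_of_nonneg hr] at hw
    simp at hw ⊢
    linarith
  obtain ⟨h1, h2⟩ := aux_circle_lintegral p hp g 0 r (hg.mono hs)
  rw [h1, ← h2]
  have h3 : hardyLintegral p g r ≤ hardySup p g :=
    le_iSup (fun r : Set.Ico (0 : ℝ) 1 => hardyLintegral p g r) ⟨r, hr, hr1⟩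
  calc _ = ENNReal.ofReal (2 * Real.pi) * hardyLintegral p g r := by
        unfold hardyLintegral circleMeasure
        rw [lintegral_smul_measure, smul_eq_mul, ← mul_assoc,
          ← ENNReal.ofReal_mul (by positivity), mul_inv_cancel₀ (by positivity)]
        simp [circleMap]
    _ ≤ _ := by gcongr

lemma aux_growth (p : ℝ) (hp : 0 < p) (g : ℂ → ℂ) (hgm : Measurable g)
    (hg : DifferentiableOn ℂ g (ball 0 1)) (hH : hardySup p g < ⊤) (z : ℂ) (hz : ‖z‖ < 1) :
    ‖g z‖ ^ p ≤ 16 * (hardySup p g).toReal / (1 - ‖z‖) := by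
  set r₀ := (1 - ‖z‖) / 2 with hr₀
  have hr₀pos : 0 < r₀ := by linarith
  set F : ℂ → ℝ≥0∞ := fun w => ENNReal.ofReal (‖g w‖ ^ p) with hF
  have hFm : Measurable F := by
    exact ENNReal.measurable_ofReal.comp (hgm.norm.pow_const p)
  have hA : AnalyticOnNhd ℂ g (ball 0 1) := hg.analyticOnNhd isOpen_ball
  -- upper bound
  have up : ∫⁻ w, (ball z r₀).indicator F w
      ≤ ENNReal.ofReal (2 * r₀) * (ENNReal.ofReal (2 * Real.pi) * hardySup p g) := by
    rw [aux_polar _ (hFm.indicator measurableSet_ball)]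
    calc _ ≤ ∫⁻ r in Ioi (0:ℝ), (Ioo (‖z‖ - r₀) (‖z‖ + r₀)).indicator
          (fun _ => ENNReal.ofReal (2 * Real.pi) * hardySup p g) r := by
          apply setLIntegral_mono' measurableSet_Ioi
          intro r hr
          have hr' : 0 < r := hr
          by_cases hrm : r ∈ Ioo (‖z‖ - r₀) (‖z‖ + r₀)
          · rw [indicator_of_mem hrm]
            have hr1 : r < 1 := by linarith [hrm.2]
            refine le_trans ?_ (aux_hardy p hp g hg.continuousOn r hr'.le hr1)
            apply lintegral_mono
            intro θ
            calc _ ≤ 1 * F (circleMap 0 r θ) := by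
                  exact mul_le_mul' (ENNReal.ofReal_le_one.2 hr1.le) (indicator_le_self _ _ _)
              _ = _ := one_mul _
          · rw [indicator_of_notMem hrm]
            rw [nonpos_iff_eq_zero]
            apply lintegral_eq_zero_of_ae_eq_zero
            refine Eventually.of_forall fun θ => ?_
            have : circleMap 0 r θ ∉ ball z r₀ := by
              intro hmem
              apply hrm
              rw [mem_ball, dist_eq_norm] at hmem
              have h1 := abs_norm_sub_norm_le (circleMap 0 r θ) z
              rw [norm_circleMap_zero, abs_of_pos hr'] at h1
              have h2 := abs_lt.1 (h1.trans_lt hmem)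
              constructor <;> linarith [h2.1, h2.2]
            simp [indicator_of_notMem this]
      _ ≤ ∫⁻ r, (Ioo (‖z‖ - r₀) (‖z‖ + r₀)).indicator
          (fun _ => ENNReal.ofReal (2 * Real.pi) * hardySup p g) r := setLIntegral_le_lintegral _ _
      _ = _ := by
          rw [lintegral_indicator measurableSet_Ioo, setLIntegral_const, Real.volume_Ioo, mul_comm]
          congr 2
          ring
  -- lower bound
  have low : ENNReal.ofReal (r₀ / 2) * (ENNReal.ofReal (r₀ / 2) *
      ENNReal.ofReal (2 * Real.pi * ‖g z‖ ^ p)) ≤ ∫⁻ w, (ball z r₀).indicator F w := by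
    rw [← lintegral_add_left_eq_self _ z, aux_polar
      (fun x => (ball z r₀).indicator F (z + x))
      ((hFm.indicator measurableSet_ball).comp (measurable_const_add z))]
    calc _ = ∫⁻ r in Ioo (r₀ / 2) r₀, ENNReal.ofReal (r₀ / 2) *
          ENNReal.ofReal (2 * Real.pi * ‖g z‖ ^ p) := by
          rw [setLIntegral_const, Real.volume_Ioo, mul_comm]
          congr 2
          ring
      _ ≤ ∫⁻ r in Ioo (r₀ / 2) r₀, ∫⁻ θ in Ioo (-Real.pi) Real.pi,
          ENNReal.ofReal r * (ball z r₀).indicator F (z + circleMap 0 r θ) := by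
          apply setLIntegral_mono' measurableSet_Ioo
          intro r hr
          have hrpos : 0 < r := by linarith [hr.1]
          have hsub : closedBall z r ⊆ ball 0 1 := by
            intro w hw
            rw [mem_closedBall, dist_eq_norm] at hw
            rw [mem_ball, dist_zero_right]
            have := norm_le_norm_add_norm_sub' w z
            linarith [hr.2]
          have hsm := aux_submean p hp g z r hrpos (hA.mono hsub)
          have hci := (aux_circle_lintegral p hp g z r (by
            rw [abs_of_pos hrpos]
            exact hg.continuousOn.mono (sphere_subset_closedBall.trans hsub))).1
          calc _ ≤ ENNReal.ofReal r * ∫⁻ θ in Ioo (-Real.pi) Real.pi,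
                  ENNReal.ofReal (‖g (circleMap z r θ)‖ ^ p) := by
                rw [hci]
                gcongr
                exact hr.1.le
            _ = ∫⁻ θ in Ioo (-Real.pi) Real.pi,
                  ENNReal.ofReal r * ENNReal.ofReal (‖g (circleMap z r θ)‖ ^ p) := by
                rw [lintegral_const_mul' _ _ ENNReal.ofReal_ne_top]
            _ = _ := by
                congr 1
                ext θ
                have e : z + circleMap 0 r θ = circleMap z r θ := by simp [circleMap]
                have : circleMap z r θ ∈ ball z r₀ := by
                  rw [mem_ball, dist_eq_norm, ← e, add_sub_cancel_left, norm_circleMap_zero,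
                    abs_of_pos hrpos]
                  exact hr.2
                rw [e, indicator_of_mem this]
      _ ≤ _ := lintegral_mono_set (fun r hr => by
          have : 0 < r := by linarith [hr.1]
          exact this)
  have key := low.trans up
  obtain ⟨H, hHe⟩ : ∃ H, H = (hardySup p g).toReal := ⟨_, rfl⟩
  have hH0 : 0 ≤ H := hHe ▸ ENNReal.toReal_nonneg
  rw [← ENNReal.ofReal_toReal hH.ne, ← hHe, ← ENNReal.ofReal_mul (by positivity),
    ← ENNReal.ofReal_mul (by positivity), ← ENNReal.ofReal_mul (by positivity),
    ← ENNReal.ofReal_mul (by positivity), ENNReal.ofReal_le_ofReal_iff (by positivity)] at key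
  rw [← hHe, le_div_iff₀ (by linarith)]
  have e : 1 - ‖z‖ = 2 * r₀ := by rw [hr₀]; ring
  rw [e]
  have hpos : 0 < r₀ * Real.pi := by positivity
  refine le_of_mul_le_mul_left ?_ hpos
  nlinarith

/-- For `0 < p < 1`, every `f ∈ S^p` satisfies the pointwise estimate
`|f(z)| ≤ C ‖f‖_{S^p} (1-|z|²)^{-(1/p-1)}`. -/
theorem pointwise_bound_Sp (p : ℝ) (hp : 0 < p) (hp1 : p < 1) :
    ∃ C : ℝ, 0 < C ∧ ∀ f : ℂ → ℂ, MemS p f → ∀ z ∈ unitDisk,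
      ‖f z‖ ≤ C * sNorm p f / (1 - ‖z‖ ^ 2) ^ (1 / p - 1) := by
  obtain ⟨a, ha⟩ : ∃ a, a = 1 / p - 1 := ⟨_, rfl⟩
  have hapos : 0 < a := by
    rw [ha, sub_pos, lt_div_iff₀ hp]
    linarith
  have ha1 : 1 / p = a + 1 := by linarith
  have hK0 : (0:ℝ) < 16 ^ (1 / p) / a * 2 ^ a := by positivity
  refine ⟨1 + 16 ^ (1 / p) / a * 2 ^ a, by linarith, ?_⟩
  rintro f ⟨hf, hH⟩ z hz
  have hz1 : ‖z‖ < 1 := by simpa [unitDisk] using hz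
  unfold unitDisk at hf
  have hg : DifferentiableOn ℂ (deriv f) (ball 0 1) := hf.deriv isOpen_ball
  obtain ⟨N, hN⟩ : ∃ N, N = ((hardySup p (deriv f)).toReal) ^ (1 / p) := ⟨_, rfl⟩
  have hN0 : 0 ≤ N := by rw [hN]; positivity
  have hgr : ∀ w : ℂ, ‖w‖ < 1 →
      ‖deriv f w‖ ≤ 16 ^ (1 / p) * N * (1 - ‖w‖) ^ (-a - 1) := by
    intro w hw
    have h1 := aux_growth p hp (deriv f) (measurable_deriv f) hg hH w hw
    have hw' : 0 < 1 - ‖w‖ := by linarith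
    have h2 := Real.rpow_le_rpow (by positivity) h1 (z := 1 / p) (by positivity)
    rw [← Real.rpow_mul (norm_nonneg _), mul_one_div_cancel hp.ne', Real.rpow_one,
      Real.div_rpow (by positivity) hw'.le, Real.mul_rpow (by positivity) (by positivity),
      ← hN] at h2
    refine h2.trans_eq ?_
    rw [div_eq_mul_inv, ← Real.rpow_neg hw'.le]
    congr 2
    linarith
  have hseg : ∀ t ∈ Icc (0:ℝ) 1, t * ‖z‖ < 1 := by
    intro t ht
    have := mul_le_mul_of_nonneg_right ht.2 (norm_nonneg z)
    linarith
  have hnorm : ∀ t ∈ Icc (0:ℝ) 1, ‖(t:ℂ) * z‖ = t * ‖z‖ := by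
    intro t ht
    rw [norm_mul, Complex.norm_real, Real.norm_of_nonneg ht.1]
  have hder : ∀ t ∈ Icc (0:ℝ) 1,
      HasDerivAt (fun t : ℝ => f ((t:ℂ) * z)) (deriv f ((t:ℂ) * z) * z) t := by
    intro t ht
    have hmem : (t:ℂ) * z ∈ ball (0:ℂ) 1 := by
      rw [mem_ball, dist_zero_right, hnorm t ht]
      exact hseg t ht
    have h1 : HasDerivAt f (deriv f ((t:ℂ) * z)) ((t:ℂ) * z) :=
      (hf.differentiableAt (isOpen_ball.mem_nhds hmem)).hasDerivAt
    have h2 : HasDerivAt (fun t : ℝ => (t:ℂ) * z) z t := by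
      simpa using (Complex.ofRealCLM.hasDerivAt (x := t)).mul_const z
    exact h1.comp t h2
  set A := 16 ^ (1 / p) * N with hA
  have hA0 : 0 ≤ A := by positivity
  have hB : ∀ t ∈ Icc (0:ℝ) 1,
      HasDerivAt (fun t : ℝ => ‖f 0‖ + A / a * (1 - t * ‖z‖) ^ (-a))
        (A * ‖z‖ * (1 - t * ‖z‖) ^ (-a - 1)) t := by
    intro t ht
    have hpos : 0 < 1 - t * ‖z‖ := by linarith [hseg t ht]
    have h1 : HasDerivAt (fun t : ℝ => 1 - t * ‖z‖) (-‖z‖) t := by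
      simpa using ((hasDerivAt_id t).mul_const ‖z‖).const_sub 1
    have h2 := ((h1.rpow_const (p := -a) (Or.inl hpos.ne')).const_mul (A / a)).const_add ‖f 0‖
    have e : A * ‖z‖ * (1 - t * ‖z‖) ^ (-a - 1)
        = A / a * (-‖z‖ * -a * (1 - t * ‖z‖) ^ (-a - 1)) := by
      field_simp
    rw [e]
    exact h2
  have hmain := image_norm_le_of_norm_deriv_right_le_deriv_boundary' (a := 0) (b := 1)
    (f := fun t : ℝ => f ((t:ℂ) * z)) (f' := fun t : ℝ => deriv f ((t:ℂ) * z) * z)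
    (B := fun t : ℝ => ‖f 0‖ + A / a * (1 - t * ‖z‖) ^ (-a))
    (B' := fun t : ℝ => A * ‖z‖ * (1 - t * ‖z‖) ^ (-a - 1))
    (fun t ht => (hder t ht).continuousAt.continuousWithinAt)
    (fun t ht => (hder t (Ico_subset_Icc_self ht)).hasDerivWithinAt)
    (by simp; positivity)
    (fun t ht => (hB t ht).continuousAt.continuousWithinAt)
    (fun t ht => (hB t (Ico_subset_Icc_self ht)).hasDerivWithinAt)
    (by
      intro t ht
      have ht' := Ico_subset_Icc_self ht
      have h1 := hgr ((t:ℂ) * z) (by rw [hnorm t ht']; exact hseg t ht')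
      rw [hnorm t ht'] at h1
      rw [norm_mul]
      calc _ ≤ A * (1 - t * ‖z‖) ^ (-a - 1) * ‖z‖ := by gcongr
        _ = _ := by ring)
    (right_mem_Icc.2 zero_le_one)
  simp only [Complex.ofReal_one, one_mul] at hmain
  have hs1 : 0 < 1 - ‖z‖ := by linarith
  have hsq : 0 < 1 - ‖z‖ ^ 2 := by nlinarith [norm_nonneg z]
  set D := (1 - ‖z‖ ^ 2) ^ (-a) with hD
  have hD0 : 0 < D := by positivity
  have hD1 : 1 ≤ D := by
    apply Real.one_le_rpow_of_pos_of_le_one_of_nonpos hsq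
    · nlinarith [norm_nonneg z]
    · linarith
  have hcmp : (1 - ‖z‖) ^ (-a) ≤ 2 ^ a * D := by
    have h1 : (1 - ‖z‖) ^ (-a) ≤ ((1 - ‖z‖ ^ 2) / 2) ^ (-a) := by
      apply Real.rpow_le_rpow_of_nonpos (by positivity)
      · nlinarith [norm_nonneg z]
      · linarith
    refine h1.trans_eq ?_
    rw [Real.div_rpow hsq.le (by norm_num), Real.rpow_neg (by norm_num : (0:ℝ) ≤ 2), ← hD]
    field_simp
  rw [← ha, div_eq_mul_inv, ← Real.rpow_neg hsq.le, ← hD, sNorm, ← hN]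
  calc ‖f z‖ ≤ ‖f 0‖ + A / a * (1 - ‖z‖) ^ (-a) := hmain
    _ ≤ ‖f 0‖ * D + A / a * (2 ^ a * D) := by
        gcongr
        exact le_mul_of_one_le_right (norm_nonneg _) hD1
    _ = (1 * ‖f 0‖ + (16 ^ (1 / p) / a * 2 ^ a) * N) * D := by rw [hA]; ring
    _ ≤ _ := by
        gcongr
        nlinarith [norm_nonneg (f 0), mul_nonneg hK0.le (norm_nonneg (f 0))]
end
end
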